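/- arXiv:2601.02762 — 4 statements merged into one kernel-verified Lean document; each statement's English description precedes it below -/
import Mathlib

section
/- Let L be a symmetric positive-definite n×n real matrix whose smallest eigenvalue is ℓ > 0. Let x, ξ, d_model, γ, F : ℝ → ℝⁿ be functions with x, ξ, d_model, γ differentiable, and define the disturbance d = d_model + γ, the auxiliary dynamics ξ'(t) = −L(ξ(t) + d_model(t) + L x(t) + F(t)), the state dynamics x'(t) = F(t) + d(t), and the estimate d̂ = d_model + L x + ξ. If ‖γ'(t)‖ ≤ D for all t ≥ 0, then for all t ≥ 0 the estimation error satisfies ‖d̂(t) − d(t)‖ ≤ e^{−ℓ t} ‖d̂(0) − d(0)‖ + (D/ℓ)(1 − e^{−ℓ t}); in particular the estimation error converges exponentially to the closed ball of radius D/ℓ. -/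
open Matrix

/-!
The unknown model `d_model` cancels in the error `e = d̂ - d = L x + ξ - γ`, and differentiating
gives `e' = -L e - γ'`. Where `e ≠ 0`, the norm has right derivative
`⟪e, e'⟫ / ‖e‖ ≤ -ℓ ‖e‖ + D`; where `e = 0` it need not be differentiable, but its right slopes are
bounded in the limit by `‖e'‖ = ‖γ'‖ ≤ D`. Grönwall's inequality, which allows the negative rate
`-ℓ`, gives the bound.
-/

open Set
open scoped InnerProductSpace

section Coercivity

open scoped MatrixOrder

variable {𝕜 ι : Type*} [RCLike 𝕜] [Fintype ι] [DecidableEq ι]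

theorem mul_norm_sq_le_re_inner_toEuclideanLin {A : Matrix ι ι 𝕜} (hA : A.IsHermitian) {c : ℝ}
    (hc : ∀ i, c ≤ hA.eigenvalues i) (v : EuclideanSpace 𝕜 ι) :
    c * ‖v‖ ^ 2 ≤ RCLike.re ⟪v, A.toEuclideanLin v⟫_𝕜 := by
  have hle : algebraMap ℝ (Matrix ι ι 𝕜) c ≤ A := by
    refine algebraMap_le_of_le_spectrum ?_ hA.isSelfAdjoint
    rw [hA.spectrum_real_eq_range_eigenvalues]
    exact forall_mem_range.mpr hc
  have hpos : 0 ≤ RCLike.re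
      ⟪v, (A - algebraMap ℝ (Matrix ι ι 𝕜) c).toEuclideanLin v⟫_𝕜 :=
    (Matrix.isPositive_toEuclideanLin_iff.mpr (Matrix.le_iff.mp hle)).re_inner_nonneg_right v
  have hscalar : (algebraMap ℝ (Matrix ι ι 𝕜) c).toEuclideanLin v = (c : 𝕜) • v := by
    ext i
    rw [Algebra.algebraMap_eq_smul_one]
    simp [Matrix.smul_mulVec, RCLike.real_smul_eq_coe_mul]
  rw [map_sub, LinearMap.sub_apply, hscalar, inner_sub_right, inner_smul_right, map_sub,
    RCLike.re_ofReal_mul, inner_self_eq_norm_sq] at hpos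
  exact sub_nonneg.mp hpos

end Coercivity

section RightDerivative

variable {E : Type*} [NormedAddCommGroup E] [InnerProductSpace ℝ E]

theorem hasDerivWithinAt_norm_of_ne_zero {e : ℝ → E} {e' : E} {s : Set ℝ} {t : ℝ}
    (he : HasDerivWithinAt e e' s t) (h0 : e t ≠ 0) :
    HasDerivWithinAt (fun τ => ‖e τ‖) (⟪e t, e'⟫_ℝ / ‖e t‖) s t := by
  have hsqrt := he.norm_sq.sqrt (pow_ne_zero 2 (norm_ne_zero_iff.mpr h0))
  simpa only [Real.sqrt_sq (norm_nonneg _), mul_div_mul_left _ _ (two_ne_zero' ℝ)] using hsqrt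

theorem norm_le_gronwallBound_of_inner_right_deriv_le {e e' : ℝ → E} {δ K ε a b : ℝ}
    (he : ContinuousOn e (Icc a b))
    (he' : ∀ t ∈ Ico a b, HasDerivWithinAt e (e' t) (Ici t) t) (ha : ‖e a‖ ≤ δ)
    (hinner : ∀ t ∈ Ico a b, ⟪e t, e' t⟫_ℝ ≤ (K * ‖e t‖ + ε) * ‖e t‖)
    (hzero : ∀ t ∈ Ico a b, e t = 0 → ‖e' t‖ ≤ ε) :
    ∀ t ∈ Icc a b, ‖e t‖ ≤ gronwallBound δ K ε (t - a) := by
  refine le_gronwallBound_of_liminf_deriv_right_le (f' := fun t => K * ‖e t‖ + ε) he.norm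
    (fun t ht r hr => ?_) ha fun _ _ => le_rfl
  by_cases h0 : e t = 0
  · refine (he' t ht).liminf_right_slope_norm_le ((hzero t ht h0).trans_lt ?_)
    simpa only [h0, norm_zero, mul_zero, zero_add] using hr
  · refine (hasDerivWithinAt_norm_of_ne_zero (he' t ht) h0).liminf_right_slope_le
      (lt_of_le_of_lt ?_ hr)
    exact (div_le_iff₀ (norm_pos_iff.mpr h0)).mpr (hinner t ht)

theorem norm_le_gronwallBound_of_coercive {A : ℝ → E →ₗ[ℝ] E} {e w : ℝ → E} {δ c ε a b : ℝ}
    (hA : ∀ t ∈ Ico a b, ∀ v, c * ‖v‖ ^ 2 ≤ ⟪v, A t v⟫_ℝ)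
    (he : ContinuousOn e (Icc a b))
    (he' : ∀ t ∈ Ico a b, HasDerivWithinAt e (-A t (e t) + w t) (Ici t) t)
    (hw : ∀ t ∈ Ico a b, ‖w t‖ ≤ ε) (ha : ‖e a‖ ≤ δ) :
    ∀ t ∈ Icc a b, ‖e t‖ ≤ gronwallBound δ (-c) ε (t - a) := by
  refine norm_le_gronwallBound_of_inner_right_deriv_le he he' ha (fun t ht => ?_)
    fun t ht h0 => by simpa only [h0, map_zero, neg_zero, zero_add] using hw t ht
  calc ⟪e t, -A t (e t) + w t⟫_ℝ = -⟪e t, A t (e t)⟫_ℝ + ⟪e t, w t⟫_ℝ := by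
        rw [inner_add_right, inner_neg_right]
    _ ≤ -(c * ‖e t‖ ^ 2) + ‖e t‖ * ε := by
        gcongr
        · exact hA t ht (e t)
        · exact (real_inner_le_norm _ _).trans (by gcongr; exact hw t ht)
    _ = (-c * ‖e t‖ + ε) * ‖e t‖ := by ring

end RightDerivative

theorem hasDerivWithinAt_observer_error {E : Type*} [NormedAddCommGroup E] [NormedSpace ℝ E]
    {L : E →L[ℝ] E} {x ξ dmodel γ d dhat : ℝ → E} {F γ' : E} {s : Set ℝ} {t : ℝ}
    (hd : ∀ t, d t = dmodel t + γ t)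
    (hdhat : ∀ t, dhat t = dmodel t + L (x t) + ξ t)
    (hγ : HasDerivWithinAt γ γ' s t)
    (hx : HasDerivWithinAt x (F + d t) s t)
    (hξ : HasDerivWithinAt ξ (-L (ξ t + dmodel t + L (x t) + F)) s t) :
    HasDerivWithinAt (fun τ => dhat τ - d τ) (-L (dhat t - d t) + -γ') s t := by
  have herror (τ : ℝ) : dhat τ - d τ = L (x τ) + ξ τ - γ τ := by
    rw [hdhat, hd]
    abel
  have hLx : HasDerivWithinAt (fun τ => L (x τ)) (L (F + d t)) s t :=
    L.hasFDerivAt.comp_hasDerivWithinAt t hx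
  rw [funext herror]
  refine ((hLx.add hξ).sub hγ).congr_deriv ?_
  rw [hdhat]
  simp only [map_add, map_sub]
  abel

theorem feedback_calibrated_observer_error_bound_general
    {E : Type*} [NormedAddCommGroup E] [InnerProductSpace ℝ E]
    {L : E →L[ℝ] E} {ℓ : ℝ} (hℓ : ℓ ≠ 0) (hL : ∀ v, ℓ * ‖v‖ ^ 2 ≤ ⟪v, L v⟫_ℝ)
    {x ξ dmodel γ γ' F d dhat : ℝ → E}
    (hd : ∀ t, d t = dmodel t + γ t)
    (hγ : ∀ t, 0 ≤ t → HasDerivWithinAt γ (γ' t) (Ici 0) t)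
    (hx : ∀ t, 0 ≤ t → HasDerivWithinAt x (F t + d t) (Ici 0) t)
    (hξ : ∀ t, 0 ≤ t →
      HasDerivWithinAt ξ (-L (ξ t + dmodel t + L (x t) + F t)) (Ici 0) t)
    (hdhat : ∀ t, dhat t = dmodel t + L (x t) + ξ t)
    {D : ℝ} (hD : ∀ t, 0 ≤ t → ‖γ' t‖ ≤ D) :
    ∀ t, 0 ≤ t → ‖dhat t - d t‖ ≤
      Real.exp (-ℓ * t) * ‖dhat 0 - d 0‖ + (D / ℓ) * (1 - Real.exp (-ℓ * t)) := by
  intro t ht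
  have herror (τ : ℝ) (hτ : 0 ≤ τ) : HasDerivWithinAt (fun τ => dhat τ - d τ)
      (-L (dhat τ - d τ) + -γ' τ) (Ici 0) τ :=
    hasDerivWithinAt_observer_error hd hdhat (hγ τ hτ) (hx τ hτ) (hξ τ hτ)
  have hbound : ‖dhat t - d t‖ ≤ gronwallBound ‖dhat 0 - d 0‖ (-ℓ) D (t - 0) :=
    norm_le_gronwallBound_of_coercive (A := fun _ => L) (w := fun τ => -γ' τ) (fun _ _ => hL)
      (fun τ hτ => (herror τ hτ.1).continuousWithinAt.mono Icc_subset_Ici_self)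
      (fun τ hτ => (herror τ hτ.1).mono (Ici_subset_Ici.mpr hτ.1))
      (fun τ hτ => (norm_neg _).trans_le (hD τ hτ.1)) le_rfl t ⟨ht, le_rfl⟩
  rw [gronwallBound_of_K_ne_0 (neg_ne_zero.mpr hℓ), sub_zero] at hbound
  exact hbound.trans_eq (by rw [div_neg]; ring)

/-- **Theorem 1 of the paper.** The feedback-calibrated disturbance observer
`d̂ = d_model + L x + ξ` with auxiliary dynamics `ξ' = −L(ξ + d_model + L x + F)`,
applied to `x' = F + d` where `d = d_model + γ` and the learning residual `γ`
has derivative bounded by `D`, has estimation error satisfying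
`‖d̂(t) − d(t)‖ ≤ e^{−ℓ t}‖d̂(0) − d(0)‖ + (D/ℓ)(1 − e^{−ℓ t})`,
where `ℓ > 0` is the smallest eigenvalue of the symmetric positive-definite gain `L`. -/
theorem feedback_calibrated_observer_error_bound
    {n : ℕ} (L : Matrix (Fin n) (Fin n) ℝ)
    (hLsymm : L.IsSymm) (hLpd : L.PosDef)
    (ℓ : ℝ) (hℓ : 0 < ℓ)
    (hmin : IsLeast (Set.range hLpd.isHermitian.eigenvalues) ℓ)
    (x ξ dmodel γ γ' F d dhat : ℝ → EuclideanSpace ℝ (Fin n))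
    (hd : ∀ t, d t = dmodel t + γ t)
    (hdm : Differentiable ℝ dmodel)
    (hγ : ∀ t, HasDerivAt γ (γ' t) t)
    (hx : ∀ t, HasDerivAt x (F t + d t) t)
    (hξ : ∀ t, HasDerivAt ξ
      (-(Matrix.toEuclideanLin L
          (ξ t + dmodel t + Matrix.toEuclideanLin L (x t) + F t))) t)
    (hdhat : ∀ t, dhat t = dmodel t + Matrix.toEuclideanLin L (x t) + ξ t)
    (D : ℝ) (hD : ∀ t, 0 ≤ t → ‖γ' t‖ ≤ D) :
    ∀ t, 0 ≤ t → ‖dhat t - d t‖ ≤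
      Real.exp (-ℓ * t) * ‖dhat 0 - d 0‖ + (D / ℓ) * (1 - Real.exp (-ℓ * t)) :=
  feedback_calibrated_observer_error_bound_general (L := L.toEuclideanLin.toContinuousLinearMap)
    hℓ.ne' (mul_norm_sq_le_re_inner_toEuclideanLin hLpd.isHermitian
      fun i => hmin.2 (mem_range_self i)) hd (fun t _ => (hγ t).hasDerivWithinAt)
    (fun t _ => (hx t).hasDerivWithinAt) (fun t _ => (hξ t).hasDerivWithinAt) hdhat hD
end

section
/- Let L be a symmetric positive-definite n×n real matrix. Let x, ξ, d_model, γ, F : ℝ → ℝⁿ with x, ξ, d_model, γ differentiable, d = d_model + γ, x'(t) = F(t) + d(t), ξ'(t) = −L(ξ(t) + d_model(t) + L x(t) + F(t)), and d̂ = d_model + L x + ξ. Then the estimation error d̃ = d̂ − d is differentiable and satisfies the error dynamics d̃'(t) = −L d̃(t) − γ'(t) for all t. -/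
open Matrix

/-! With `d̂ = d_model + L x + ξ` and `d = d_model + γ`, the model term cancels from the error:
`d̂ - d = (L x + ξ) - γ`. Differentiating `L x + ξ` along the system gives
`L (F + d) - L (d̂ + F) = -L (d̂ - d)`, where the drift `F` cancels too, so that only `γ` is left
to force the error. -/

section NormedSpace

variable {𝕜 E : Type*} [NontriviallyNormedField 𝕜] [NormedAddCommGroup E] [NormedSpace 𝕜 E]
  (L : E →L[𝕜] E) {x ξ : 𝕜 → E} {t : 𝕜}

theorem hasDerivAt_observer_correction {dmodel d F : E} (hx : HasDerivAt x (F + d) t)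
    (hξ : HasDerivAt ξ (-L (ξ t + dmodel + L (x t) + F)) t) :
    HasDerivAt (fun s => L (x s) + ξ s) (-L (dmodel + L (x t) + ξ t - d)) t := by
  have hLx : HasDerivAt (fun s => L (x s)) (L (F + d)) t := L.hasFDerivAt.comp_hasDerivAt t hx
  have drift_cancels :
      F + d - (ξ t + dmodel + L (x t) + F) = -(dmodel + L (x t) + ξ t - d) := by abel
  refine (hLx.add hξ).congr_deriv ?_
  rw [← sub_eq_add_neg, ← map_sub, drift_cancels, map_neg]

theorem feedback_calibrated_observer_error_dynamics_general
    {dmodel γ F d dhat : 𝕜 → E} {γ' : E}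
    (hd : ∀ s, d s = dmodel s + γ s)
    (hγ : HasDerivAt γ γ' t)
    (hx : HasDerivAt x (F t + d t) t)
    (hξ : HasDerivAt ξ (-L (ξ t + dmodel t + L (x t) + F t)) t)
    (hdhat : ∀ s, dhat s = dmodel s + L (x s) + ξ s) :
    HasDerivAt (fun s => dhat s - d s) (-L (dhat t - d t) - γ') t := by
  have error_eq : (fun s => dhat s - d s) = fun s => L (x s) + ξ s - γ s := by
    funext s
    rw [hdhat, hd, add_assoc, add_sub_add_left_eq_sub]
  rw [error_eq, hdhat t]
  exact (hasDerivAt_observer_correction L hx hξ).sub hγ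

end NormedSpace

/-- Key derivation in the proof of the paper's Theorem 1: the estimation error
`d̃ = d̂ − d` of the feedback-calibrated observer `d̂ = d_model + L x + ξ`,
`ξ' = −L(ξ + d_model + L x + F)`, for the system `x' = F + d`, `d = d_model + γ`,
is differentiable and obeys the error dynamics `d̃' = −L d̃ − γ'`. -/
theorem feedback_calibrated_observer_error_dynamics
    {n : ℕ} (L : Matrix (Fin n) (Fin n) ℝ)
    (hLsymm : L.IsSymm) (hLpd : L.PosDef)
    (x ξ dmodel γ γ' F d dhat : ℝ → EuclideanSpace ℝ (Fin n))
    (hd : ∀ t, d t = dmodel t + γ t)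
    (hdm : Differentiable ℝ dmodel)
    (hγ : ∀ t, HasDerivAt γ (γ' t) t)
    (hx : ∀ t, HasDerivAt x (F t + d t) t)
    (hξ : ∀ t, HasDerivAt ξ
      (-(Matrix.toEuclideanLin L
          (ξ t + dmodel t + Matrix.toEuclideanLin L (x t) + F t))) t)
    (hdhat : ∀ t, dhat t = dmodel t + Matrix.toEuclideanLin L (x t) + ξ t) :
    ∀ t, HasDerivAt (fun s => dhat s - d s)
      (-(Matrix.toEuclideanLin L (dhat t - d t)) - γ' t) t :=
  fun t => feedback_calibrated_observer_error_dynamics_general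
    (LinearMap.toContinuousLinearMap (Matrix.toEuclideanLin L)) hd (hγ t) (hx t) (hξ t) hdhat
end

section
/- Let L be a symmetric positive-definite n×n real matrix whose smallest eigenvalue is ℓ > 0, let w : ℝ → ℝⁿ be continuous, and let y : ℝ → ℝⁿ be differentiable with y'(t) = −L y(t) − w(t) for all t ≥ 0. If limsup_{t→∞} ‖w(t)‖ ≤ D, then limsup_{t→∞} ‖y(t)‖ ≤ D/ℓ. -/
open Matrix Filter

/-!
If `‖w‖ ≤ ℓ b` from some time on, coercivity of `L` and Young's inequality turn the equation into
`d/dt ‖y‖² ≤ -ℓ ‖y‖² + ℓ b²`. The Grönwall bound of this scalar inequality tends to `b²`, so `‖y‖` is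
eventually below every `c > b`; any `b > limsup ‖w‖ / ℓ` is allowed.
-/

section Coercivity

open scoped ComplexOrder MatrixOrder

lemma mul_norm_sq_le_re_inner_toEuclideanLin_s3 {𝕜 ι : Type*} [RCLike 𝕜] [Fintype ι] [DecidableEq ι]
    {L : Matrix ι ι 𝕜} (hL : L.IsHermitian) {ℓ : ℝ} (hℓ : ∀ i, ℓ ≤ hL.eigenvalues i)
    (x : EuclideanSpace 𝕜 ι) :
    ℓ * ‖x‖ ^ 2 ≤ RCLike.re (inner 𝕜 x (toEuclideanLin L x)) := by
  have hspec : ∀ μ ∈ spectrum ℝ L, ℓ ≤ μ := by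
    rw [hL.spectrum_real_eq_range_eigenvalues]
    exact Set.forall_mem_range.mpr hℓ
  have hpos : (L - algebraMap ℝ (Matrix ι ι 𝕜) ℓ).PosSemidef :=
    Matrix.le_iff.mp ((algebraMap_le_iff_le_spectrum hL.isSelfAdjoint).mpr hspec)
  have hx := (isPositive_toEuclideanLin_iff.mpr hpos).re_inner_nonneg_right x
  have hinner : RCLike.re (inner 𝕜 x (toEuclideanLin (L - algebraMap ℝ (Matrix ι ι 𝕜) ℓ) x)) =
      RCLike.re (inner 𝕜 x (toEuclideanLin L x)) - ℓ * ‖x‖ ^ 2 := by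
    rw [Algebra.algebraMap_eq_smul_one, RCLike.real_smul_eq_coe_smul (K := 𝕜), map_sub, map_smul,
      toLpLin_one, LinearMap.sub_apply, LinearMap.smul_apply, LinearMap.id_apply, inner_sub_right,
      inner_smul_right, map_sub, RCLike.re_ofReal_mul, inner_self_eq_norm_sq]
  linarith

end Coercivity

section ScalarComparison

open scoped Topology

lemma tendsto_gronwallBound_atTop {K : ℝ} (hK : K < 0) (δ ε : ℝ) :
    Tendsto (gronwallBound δ K ε) atTop (𝓝 (-ε / K)) := by
  have hexp : Tendsto (fun x => Real.exp (K * x)) atTop (𝓝 0) :=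
    Real.tendsto_exp_atBot.comp (tendsto_id.const_mul_atTop_of_neg hK)
  rw [gronwallBound_of_K_ne_0 hK.ne]
  convert (hexp.const_mul δ).add ((hexp.sub_const 1).const_mul (ε / K)) using 2
  ring

lemma eventually_lt_of_deriv_le_mul_add {f f' : ℝ → ℝ} {K ε c : ℝ} (hK : K < 0)
    (hf : ∀ᶠ x in atTop, HasDerivAt f (f' x) x)
    (hf' : ∀ᶠ x in atTop, f' x ≤ K * f x + ε) (hc : -ε / K < c) :
    ∀ᶠ x in atTop, f x < c := by
  obtain ⟨a, ha⟩ := eventually_atTop.mp (hf.and hf')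
  have hbound : ∀ x, a ≤ x → f x ≤ gronwallBound (f a) K ε (x - a) := fun x hx =>
    le_gronwallBound_of_liminf_deriv_right_le
      (fun z hz => (ha z hz.1).1.continuousAt.continuousWithinAt)
      (fun z hz _ hr => (ha z hz.1).1.hasDerivWithinAt.liminf_right_slope_le hr)
      le_rfl (fun z hz => (ha z hz.1).2) x (Set.right_mem_Icc.mpr hx)
  have hlim : Tendsto (fun x => gronwallBound (f a) K ε (x - a)) atTop (𝓝 (-ε / K)) :=
    (tendsto_gronwallBound_atTop hK (f a) ε).comp (tendsto_atTop_add_const_right _ (-a) tendsto_id)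
  filter_upwards [hlim.eventually_lt_const hc, eventually_ge_atTop a] with x hxc hax
  exact (hbound x hax).trans_lt hxc

end ScalarComparison

section PerturbedODE

variable {E : Type*} [NormedAddCommGroup E] [InnerProductSpace ℝ E] {ℓ b : ℝ}

lemma two_mul_inner_neg_sub_le {x u v : E} (hℓ : 0 ≤ ℓ) (hu : ℓ * ‖x‖ ^ 2 ≤ inner ℝ x u)
    (hv : ‖v‖ ≤ ℓ * b) : 2 * inner ℝ x (-u - v) ≤ -ℓ * ‖x‖ ^ 2 + ℓ * b ^ 2 := by
  have hcross : -inner ℝ x v ≤ ‖x‖ * (ℓ * b) :=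
    calc -inner ℝ x v ≤ ‖x‖ * ‖v‖ := (neg_le_abs _).trans (abs_real_inner_le_norm x v)
      _ ≤ ‖x‖ * (ℓ * b) := by gcongr
  have hyoung : ℓ * (2 * ‖x‖ * b) ≤ ℓ * (‖x‖ ^ 2 + b ^ 2) := by
    gcongr
    exact two_mul_le_add_sq ‖x‖ b
  rw [inner_sub_right, inner_neg_right]
  linarith

variable {A : ℝ → E → E} {w y : ℝ → E}

lemma eventually_norm_lt_of_coercive (hℓ : 0 < ℓ)
    (hA : ∀ t x, ℓ * ‖x‖ ^ 2 ≤ inner ℝ x (A t x))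
    (hy : ∀ᶠ t in atTop, HasDerivAt y (-(A t (y t)) - w t) t)
    (hw : ∀ᶠ t in atTop, ‖w t‖ ≤ ℓ * b) {c : ℝ} (hbc : b < c) :
    ∀ᶠ t in atTop, ‖y t‖ < c := by
  have hb : 0 ≤ b := by
    obtain ⟨t, ht⟩ := hw.exists
    exact nonneg_of_mul_nonneg_right ((norm_nonneg _).trans ht) hℓ
  have hsq : ∀ᶠ t in atTop, ‖y t‖ ^ 2 < c ^ 2 := by
    refine eventually_lt_of_deriv_le_mul_add (neg_neg_of_pos hℓ) (hy.mono fun t ht => ht.norm_sq)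
      (hw.mono fun t ht => two_mul_inner_neg_sub_le hℓ.le (hA t (y t)) ht) ?_
    rw [neg_div_neg_eq, mul_div_cancel_left₀ _ hℓ.ne']
    gcongr
  exact hsq.mono fun t ht => lt_of_pow_lt_pow_left₀ 2 (hb.trans hbc.le) ht

theorem perturbed_linear_ode_limsup_bound_general (hℓ : 0 < ℓ)
    (hA : ∀ t x, ℓ * ‖x‖ ^ 2 ≤ inner ℝ x (A t x))
    (hy : ∀ᶠ t in atTop, HasDerivAt y (-(A t (y t)) - w t) t) :
    limsup (fun t => (‖y t‖ : EReal)) atTop ≤ limsup (fun t => (‖w t‖ : EReal)) atTop / ℓ := by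
  refine EReal.le_of_forall_lt_iff_le.mp fun c hc => ?_
  obtain ⟨b, hwb, hbc⟩ := EReal.lt_iff_exists_real_btwn.mp hc
  have hw : ∀ᶠ t in atTop, ‖w t‖ ≤ ℓ * b := by
    rw [EReal.div_lt_iff (EReal.coe_pos.mpr hℓ) (EReal.coe_ne_top ℓ), ← EReal.coe_mul,
      mul_comm] at hwb
    exact (eventually_lt_of_limsup_lt hwb).mono fun t ht => (EReal.coe_lt_coe_iff.mp ht).le
  have hyc := eventually_norm_lt_of_coercive hℓ hA hy hw (EReal.coe_lt_coe_iff.mp hbc)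
  exact limsup_le_of_le (h := hyc.mono fun t ht => EReal.coe_le_coe ht.le)

end PerturbedODE

/-- Ultimate-boundedness corollary underlying the paper's Theorem 1:
for `y' = −L y − w` with `L` symmetric positive definite with smallest
eigenvalue `ℓ > 0` and `limsup_{t→∞} ‖w(t)‖ ≤ D`, one has
`limsup_{t→∞} ‖y(t)‖ ≤ D/ℓ`.  (The limsups are taken in `EReal` so that
no junk values occur for unbounded signals.) -/
theorem perturbed_linear_ode_limsup_bound
    {n : ℕ} (L : Matrix (Fin n) (Fin n) ℝ)
    (hLsymm : L.IsSymm) (hLpd : L.PosDef)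
    (ℓ : ℝ) (hℓ : 0 < ℓ)
    (hmin : IsLeast (Set.range hLpd.isHermitian.eigenvalues) ℓ)
    (w y : ℝ → EuclideanSpace ℝ (Fin n))
    (hw : Continuous w)
    (hy : ∀ t, 0 ≤ t →
      HasDerivAt y (-(Matrix.toEuclideanLin L (y t)) - w t) t)
    (D : ℝ)
    (hD : Filter.limsup (fun t => (‖w t‖ : EReal)) Filter.atTop ≤ (D : EReal)) :
    Filter.limsup (fun t => (‖y t‖ : EReal)) Filter.atTop ≤ ((D / ℓ : ℝ) : EReal) := by
  have hcoercive : ∀ x, ℓ * ‖x‖ ^ 2 ≤ inner ℝ x (toEuclideanLin L x) :=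
    mul_norm_sq_le_re_inner_toEuclideanLin_s3 hLpd.isHermitian fun i => hmin.2 (Set.mem_range_self i)
  calc limsup (fun t => (‖y t‖ : EReal)) atTop
      ≤ limsup (fun t => (‖w t‖ : EReal)) atTop / ℓ :=
        perturbed_linear_ode_limsup_bound_general hℓ (fun _ => hcoercive)
          ((eventually_ge_atTop 0).mono hy)
    _ ≤ D / ℓ := EReal.div_le_div_right_of_nonneg (EReal.coe_nonneg.mpr hℓ.le) hD
    _ = ((D / ℓ : ℝ) : EReal) := (EReal.coe_div D ℓ).symm
end

section
/- Let P and Ω be symmetric positive-definite k×k real matrices, let λ_m > 0 and λ_M ≥ λ_m be the smallest and largest eigenvalues of P, let ω > 0 be the smallest eigenvalue of Ω, let r : ℝ → ℝᵏ be continuous with ‖r(t)‖ ≤ R for all t ≥ 0, and let z : ℝ → ℝᵏ be differentiable with z'(t) = −P Ω z(t) + P r(t) for all t ≥ 0. Then for all t ≥ 0, ‖z(t)‖ ≤ √(λ_M/λ_m) ( e^{−ω λ_m t} ‖z(0)‖ + R·λ_M/(ω λ_m) ); in particular z converges exponentially to a bounded set. -/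
open Matrix

/-!
Put `y = P⁻¹ z`, so that `y' = -Ω z + r`. Measuring the error by the energy `V = ⟪z, P⁻¹ z⟫` makes
the gain disappear from the decay estimate: `V' = 2 ⟪-Ω z + r, z⟫ ≤ -2 ω ‖z‖ ^ 2 + 2 R ‖z‖`. Since
`m V ≤ ‖z‖ ^ 2 ≤ M V`, where `m` and `M` bound the spectrum of `P`, the function `√V` formally
satisfies `(√V)' ≤ -(ω m) √V + R √M`, and Grönwall's inequality applies.
-/

open Set Filter
open scoped InnerProductSpace MatrixOrder Topology

section Gronwall

theorem gronwallBound_continuous_δ_ε (K x : ℝ) :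
    Continuous fun p : ℝ × ℝ => gronwallBound p.1 K p.2 x := by
  by_cases hK : K = 0
  · simp only [gronwallBound, hK, if_true]
    fun_prop
  · simp only [gronwallBound, hK, if_false]
    fun_prop

theorem mul_add_mul_sqrt_le_mul_sqrt_add_sq {v K ε η : ℝ} (hv : 0 ≤ v) (hε : 0 ≤ ε) (hη : 0 ≤ η) :
    K * v + ε * √v ≤ (K * √(v + η ^ 2) + (ε + |K| * η)) * √(v + η ^ 2) := by
  have hsqrt_le : √v ≤ √(v + η ^ 2) := Real.sqrt_le_sqrt (le_add_of_nonneg_right (sq_nonneg η))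
  have hη_le : η ≤ √(v + η ^ 2) := Real.le_sqrt_of_sq_le (le_add_of_nonneg_left hv)
  calc K * v + ε * √v ≤ K * v + ε * √v + (K + |K|) * η ^ 2 :=
        le_add_of_nonneg_right (mul_nonneg (neg_le_iff_add_nonneg'.1 (neg_le_abs K)) (sq_nonneg η))
    _ = K * (v + η ^ 2) + (ε * √v + |K| * η * η) := by ring
    _ ≤ K * (v + η ^ 2) + (ε * √(v + η ^ 2) + |K| * η * √(v + η ^ 2)) := by gcongr
    _ = (K * √(v + η ^ 2) + (ε + |K| * η)) * √(v + η ^ 2) := by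
      linear_combination (-K) * Real.mul_self_sqrt (add_nonneg hv (sq_nonneg η))

variable {V V' : ℝ → ℝ} {δ K ε a b : ℝ}

/- `√V` need not be differentiable where `V` vanishes, but `√(V + η ^ 2)` is. -/
theorem sqrt_add_sq_le_gronwallBound_of_deriv_right_le {η : ℝ} (hη : 0 < η) (hε : 0 ≤ ε)
    (hV : ContinuousOn V (Icc a b))
    (hV' : ∀ x ∈ Ico a b, HasDerivWithinAt V (V' x) (Ici x) x)
    (V_nonneg : ∀ x ∈ Icc a b, 0 ≤ V x) (ha : √(V a) ≤ δ)
    (bound : ∀ x ∈ Ico a b, V' x ≤ 2 * (K * V x + ε * √(V x))) :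
    ∀ x ∈ Icc a b, √(V x + η ^ 2) ≤ gronwallBound (δ + η) K (ε + |K| * η) (x - a) := by
  intro x hx
  have hpos (s : ℝ) (hs : s ∈ Ico a b) : 0 < V s + η ^ 2 :=
    add_pos_of_nonneg_of_pos (V_nonneg s (Ico_subset_Icc_self hs)) (pow_pos hη 2)
  have hinit : √(V a + η ^ 2) ≤ δ + η := by
    have hδ : 0 ≤ δ := (Real.sqrt_nonneg _).trans ha
    have hVa : V a ≤ δ ^ 2 := (Real.sqrt_le_left hδ).1 ha
    rw [Real.sqrt_le_left (add_nonneg hδ hη.le), add_sq]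
    linarith [mul_nonneg hδ hη.le]
  have deriv_le (s : ℝ) (hs : s ∈ Ico a b) :
      V' s / (2 * √(V s + η ^ 2)) ≤ K * √(V s + η ^ 2) + (ε + |K| * η) := by
    rw [div_le_iff₀ (mul_pos two_pos (Real.sqrt_pos.2 (hpos s hs)))]
    linarith [bound s hs, mul_add_mul_sqrt_le_mul_sqrt_add_sq (K := K)
      (V_nonneg s (Ico_subset_Icc_self hs)) hε hη.le]
  exact le_gronwallBound_of_liminf_deriv_right_le (f := fun s => √(V s + η ^ 2))
    (hV.add continuousOn_const).sqrt
    (fun s hs _ => (((hV' s hs).add_const _).sqrt (hpos s hs).ne').liminf_right_slope_le)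
    hinit deriv_le x hx

theorem sqrt_le_gronwallBound_of_deriv_right_le (hε : 0 ≤ ε)
    (hV : ContinuousOn V (Icc a b))
    (hV' : ∀ x ∈ Ico a b, HasDerivWithinAt V (V' x) (Ici x) x)
    (V_nonneg : ∀ x ∈ Icc a b, 0 ≤ V x) (ha : √(V a) ≤ δ)
    (bound : ∀ x ∈ Ico a b, V' x ≤ 2 * (K * V x + ε * √(V x))) :
    ∀ x ∈ Icc a b, √(V x) ≤ gronwallBound δ K ε (x - a) := by
  intro x hx
  have hcont : Continuous fun η => gronwallBound (δ + η) K (ε + |K| * η) (x - a) :=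
    (gronwallBound_continuous_δ_ε K (x - a)).comp
      (f := fun η : ℝ => (δ + η, ε + |K| * η)) (by fun_prop)
  have hlim : Tendsto (fun η => gronwallBound (δ + η) K (ε + |K| * η) (x - a)) (𝓝[>] 0)
      (𝓝 (gronwallBound δ K ε (x - a))) := by
    simpa only [add_zero, mul_zero] using (hcont.tendsto 0).mono_left nhdsWithin_le_nhds
  refine ge_of_tendsto hlim (eventually_of_mem self_mem_nhdsWithin fun η hη => ?_)
  exact (Real.sqrt_le_sqrt (le_add_of_nonneg_right (sq_nonneg η))).trans
    (sqrt_add_sq_le_gronwallBound_of_deriv_right_le hη hε hV hV' V_nonneg ha bound x hx)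

end Gronwall

section QuadraticForm

variable {E : Type*} [NormedAddCommGroup E] [InnerProductSpace ℝ E]

theorem inner_map_sq_le_of_isPositive {T : E →ₗ[ℝ] E} (hT : T.IsPositive) (x y : E) :
    ⟪T x, y⟫_ℝ ^ 2 ≤ ⟪T x, x⟫_ℝ * ⟪T y, y⟫_ℝ :=
  LinearMap.BilinForm.apply_sq_le_of_symm (innerₗ E ∘ₗ T) hT.inner_nonneg_left
    ⟨fun x y => by simp [hT.isSymmetric x y, real_inner_comm]⟩ x y

theorem norm_map_sq_le_mul_inner_map_self {T : E →ₗ[ℝ] E} (hT : T.IsPositive) {M : ℝ}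
    (hM : ∀ x, ⟪T x, x⟫_ℝ ≤ M * ‖x‖ ^ 2) (x : E) : ‖T x‖ ^ 2 ≤ M * ⟪T x, x⟫_ℝ := by
  rcases (sq_nonneg ‖T x‖).eq_or_lt with hzero | hpos
  · have hTx : T x = 0 := by simpa using hzero.symm
    simp only [hTx, norm_zero, inner_zero_left, mul_zero, zero_pow two_ne_zero, le_refl]
  · refine le_of_mul_le_mul_right ?_ hpos
    calc ‖T x‖ ^ 2 * ‖T x‖ ^ 2 = ⟪T x, T x⟫_ℝ ^ 2 := by rw [real_inner_self_eq_norm_sq, ← sq]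
      _ ≤ ⟪T x, x⟫_ℝ * ⟪T (T x), T x⟫_ℝ := inner_map_sq_le_of_isPositive hT x (T x)
      _ ≤ ⟪T x, x⟫_ℝ * (M * ‖T x‖ ^ 2) :=
        mul_le_mul_of_nonneg_left (hM (T x)) (hT.inner_nonneg_left x)
      _ = M * ⟪T x, x⟫_ℝ * ‖T x‖ ^ 2 := by ring

theorem norm_map_le_sqrt_mul_sqrt_inner_map_self {T : E →ₗ[ℝ] E} (hT : T.IsPositive) {M : ℝ}
    (hM : ∀ x, ⟪T x, x⟫_ℝ ≤ M * ‖x‖ ^ 2) (x : E) :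
    ‖T x‖ ≤ √M * √⟪T x, x⟫_ℝ := by
  rw [← Real.sqrt_mul' _ (hT.inner_nonneg_left x)]
  exact Real.le_sqrt_of_sq_le (norm_map_sq_le_mul_inner_map_self hT hM x)

theorem mul_inner_map_self_le_norm_map_sq {T : E → E} {m : ℝ} (hm0 : 0 ≤ m)
    (hm : ∀ x, m * ‖x‖ ^ 2 ≤ ⟪T x, x⟫_ℝ) (x : E) : m * ⟪T x, x⟫_ℝ ≤ ‖T x‖ ^ 2 := by
  have hsq : 0 ≤ ‖T x - m • x‖ ^ 2 := sq_nonneg _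
  rw [norm_sub_sq_real, real_inner_smul_right, norm_smul, mul_pow, Real.norm_of_nonneg hm0] at hsq
  linarith [mul_le_mul_of_nonneg_left (hm x) hm0]

theorem hasDerivWithinAt_inner_map_self {T : E →L[ℝ] E} (hT : T.IsSymmetric) {y : ℝ → E} {y' : E}
    {s : Set ℝ} {t : ℝ} (hy : HasDerivWithinAt y y' s t) :
    HasDerivWithinAt (fun τ => ⟪T (y τ), y τ⟫_ℝ) (2 * ⟪y', T (y t)⟫_ℝ) s t := by
  refine ((T.hasFDerivAt.comp_hasDerivWithinAt t hy).inner ℝ hy).congr_deriv ?_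
  have hsymm : ⟪T y', y t⟫_ℝ = ⟪y', T (y t)⟫_ℝ := hT y' (y t)
  rw [Function.comp_apply, hsymm, real_inner_comm, two_mul]

theorem exists_continuousLinearEquiv_of_coercive [CompleteSpace E] {T : E →L[ℝ] E} {m : ℝ}
    (hm0 : 0 < m) (hm : ∀ x, m * ‖x‖ ^ 2 ≤ ⟪T x, x⟫_ℝ) :
    ∃ e : E ≃L[ℝ] E, (e : E →L[ℝ] E) = T := by
  have hunit : IsUnit T := ContinuousLinearMap.isUnit_of_forall_le_norm_inner_map T
    (c := ⟨m, hm0.le⟩) hm0 fun x => by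
      rw [mul_comm]
      exact (hm x).trans (Real.le_norm_self _)
  exact ⟨ContinuousLinearEquiv.unitsEquiv ℝ E hunit.unit, rfl⟩

end QuadraticForm

section Rayleigh

variable {𝕜 n : Type*} [RCLike 𝕜] [Fintype n] [DecidableEq n] {A : Matrix n n 𝕜}

theorem re_inner_toEuclideanLin_algebraMap (c : ℝ) (x : EuclideanSpace 𝕜 n) :
    RCLike.re ⟪toEuclideanLin (algebraMap ℝ (Matrix n n 𝕜) c) x, x⟫_𝕜 = c * ‖x‖ ^ 2 := by
  rw [Algebra.algebraMap_eq_smul_one, RCLike.real_smul_eq_coe_smul (K := 𝕜), map_smul, toLpLin_one,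
    LinearMap.smul_apply, LinearMap.id_apply, inner_smul_left, RCLike.conj_ofReal,
    RCLike.re_ofReal_mul, inner_self_eq_norm_sq]

theorem re_inner_toEuclideanLin_mono {B : Matrix n n 𝕜} (hAB : A ≤ B) (x : EuclideanSpace 𝕜 n) :
    RCLike.re ⟪toEuclideanLin A x, x⟫_𝕜 ≤ RCLike.re ⟪toEuclideanLin B x, x⟫_𝕜 := by
  have hnonneg := (isPositive_toEuclideanLin_iff.2 (Matrix.le_iff.1 hAB)).re_inner_nonneg_left x
  rwa [map_sub, LinearMap.sub_apply, inner_sub_left, map_sub, sub_nonneg] at hnonneg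

theorem re_inner_toEuclideanLin_le_of_eigenvalues_le (hA : A.IsHermitian) {c : ℝ}
    (hc : ∀ i, hA.eigenvalues i ≤ c) (x : EuclideanSpace 𝕜 n) :
    RCLike.re ⟪toEuclideanLin A x, x⟫_𝕜 ≤ c * ‖x‖ ^ 2 := by
  have hle : A ≤ algebraMap ℝ _ c := by
    rw [le_algebraMap_iff_spectrum_le hA.isSelfAdjoint, hA.spectrum_real_eq_range_eigenvalues]
    exact forall_mem_range.2 hc
  exact (re_inner_toEuclideanLin_mono hle x).trans_eq (re_inner_toEuclideanLin_algebraMap c x)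

theorem le_re_inner_toEuclideanLin_of_le_eigenvalues (hA : A.IsHermitian) {c : ℝ}
    (hc : ∀ i, c ≤ hA.eigenvalues i) (x : EuclideanSpace 𝕜 n) :
    c * ‖x‖ ^ 2 ≤ RCLike.re ⟪toEuclideanLin A x, x⟫_𝕜 := by
  have hle : algebraMap ℝ _ c ≤ A := by
    rw [algebraMap_le_iff_le_spectrum hA.isSelfAdjoint, hA.spectrum_real_eq_range_eigenvalues]
    exact forall_mem_range.2 hc
  exact (re_inner_toEuclideanLin_algebraMap c x).symm.trans_le (re_inner_toEuclideanLin_mono hle x)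

end Rayleigh

section EnergyEstimate

variable {E : Type*} [NormedAddCommGroup E] [InnerProductSpace ℝ E]

theorem sqrt_inner_map_self_le_gronwallBound {P : E →L[ℝ] E} {m M ω R δ : ℝ}
    (hP : P.IsPositive) (hm0 : 0 ≤ m) (hm : ∀ x, m * ‖x‖ ^ 2 ≤ ⟪P x, x⟫_ℝ)
    (hM : ∀ x, ⟪P x, x⟫_ℝ ≤ M * ‖x‖ ^ 2) (hω : 0 ≤ ω) (hR : 0 ≤ R) {y y' : ℝ → E}
    (hy : ∀ t, 0 ≤ t → HasDerivWithinAt y (y' t) (Ici 0) t)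
    (dissipation : ∀ t, 0 ≤ t → ⟪y' t, P (y t)⟫_ℝ ≤ -(ω * ‖P (y t)‖ ^ 2) + R * ‖P (y t)‖)
    (hδ : √⟪P (y 0), y 0⟫_ℝ ≤ δ) {t : ℝ} (ht : 0 ≤ t) :
    √⟪P (y t), y t⟫_ℝ ≤ gronwallBound δ (-(ω * m)) (R * √M) t := by
  have hV (s : ℝ) (hs : 0 ≤ s) := hasDerivWithinAt_inner_map_self hP.isSymmetric (hy s hs)
  have bound (s : ℝ) (hs : 0 ≤ s) : 2 * ⟪y' s, P (y s)⟫_ℝ ≤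
      2 * (-(ω * m) * ⟪P (y s), y s⟫_ℝ + R * √M * √⟪P (y s), y s⟫_ℝ) := by
    have hlower := mul_inner_map_self_le_norm_map_sq hm0 hm (y s)
    have hupper : ‖P (y s)‖ ≤ √M * √⟪P (y s), y s⟫_ℝ :=
      norm_map_le_sqrt_mul_sqrt_inner_map_self hP hM (y s)
    calc 2 * ⟪y' s, P (y s)⟫_ℝ ≤ 2 * (-(ω * ‖P (y s)‖ ^ 2) + R * ‖P (y s)‖) :=
          mul_le_mul_of_nonneg_left (dissipation s hs) zero_le_two
      _ ≤ 2 * (-(ω * (m * ⟪P (y s), y s⟫_ℝ)) + R * (√M * √⟪P (y s), y s⟫_ℝ)) := by gcongr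
      _ = 2 * (-(ω * m) * ⟪P (y s), y s⟫_ℝ + R * √M * √⟪P (y s), y s⟫_ℝ) := by ring
  simpa only [sub_zero] using sqrt_le_gronwallBound_of_deriv_right_le
    (V := fun s => ⟪P (y s), y s⟫_ℝ) (mul_nonneg hR (Real.sqrt_nonneg M))
    (fun s hs => (hV s hs.1).continuousWithinAt.mono Icc_subset_Ici_self)
    (fun s hs => (hV s hs.1).mono (Ici_subset_Ici.2 hs.1))
    (fun s _ => hP.inner_nonneg_left (y s)) hδ (fun s hs => bound s hs.1) t ⟨ht, le_rfl⟩

theorem concurrent_learning_parameter_error_bound_general [CompleteSpace E] {P : E →L[ℝ] E}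
    (hP : P.IsSymmetric) {m M ω R : ℝ} (hm0 : 0 < m) (hM0 : 0 ≤ M)
    (hm : ∀ x, m * ‖x‖ ^ 2 ≤ ⟪P x, x⟫_ℝ) (hM : ∀ x, ⟪P x, x⟫_ℝ ≤ M * ‖x‖ ^ 2)
    {Ω : ℝ → E → E} (hω0 : 0 < ω) (hω : ∀ t, 0 ≤ t → ∀ x, ω * ‖x‖ ^ 2 ≤ ⟪Ω t x, x⟫_ℝ)
    {r z : ℝ → E} (hR : ∀ t, 0 ≤ t → ‖r t‖ ≤ R)
    (hz : ∀ t, 0 ≤ t → HasDerivWithinAt z (-P (Ω t (z t)) + P (r t)) (Ici 0) t)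
    {t : ℝ} (ht : 0 ≤ t) :
    ‖z t‖ ≤ √(M / m) * (Real.exp (-(ω * m) * t) * ‖z 0‖) +
      R * M / (ω * m) * (1 - Real.exp (-(ω * m) * t)) := by
  obtain ⟨e, rfl⟩ := exists_continuousLinearEquiv_of_coercive hm0 hm
  have hR0 : 0 ≤ R := (norm_nonneg _).trans (hR 0 le_rfl)
  have hPpos : (e : E →L[ℝ] E).IsPositive :=
    ⟨hP, fun x => (mul_nonneg hm0.le (sq_nonneg ‖x‖)).trans (hm x)⟩
  have hy (s : ℝ) (hs : 0 ≤ s) :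
      HasDerivWithinAt (fun τ => e.symm (z τ)) (-Ω s (z s) + r s) (Ici 0) s := by
    refine (e.symm.hasFDerivAt.comp_hasDerivWithinAt s (hz s hs)).congr_deriv ?_
    simp
  have dissipation (s : ℝ) (hs : 0 ≤ s) :
      ⟪-Ω s (z s) + r s, z s⟫_ℝ ≤ -(ω * ‖z s‖ ^ 2) + R * ‖z s‖ := by
    rw [inner_add_left, inner_neg_left]
    exact add_le_add (neg_le_neg (hω s hs (z s)))
      ((real_inner_le_norm _ _).trans (by gcongr; exact hR s hs))
  have hinit : √⟪z 0, e.symm (z 0)⟫_ℝ ≤ ‖z 0‖ / √m := by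
    rw [le_div_iff₀ (Real.sqrt_pos.2 hm0), ← Real.sqrt_mul' _ hm0.le]
    refine Real.sqrt_le_iff.2 ⟨norm_nonneg _, ?_⟩
    simpa [mul_comm] using mul_inner_map_self_le_norm_map_sq hm0.le hm (e.symm (z 0))
  have hgron := sqrt_inner_map_self_le_gronwallBound hPpos hm0.le hm hM hω0.le hR0 hy
    (by simpa using dissipation) (by simpa using hinit) ht
  calc ‖z t‖ ≤ √M * √⟪z t, e.symm (z t)⟫_ℝ := by
        simpa using norm_map_le_sqrt_mul_sqrt_inner_map_self hPpos hM (e.symm (z t))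
    _ ≤ √M * gronwallBound (‖z 0‖ / √m) (-(ω * m)) (R * √M) t := by
      gcongr
      simpa using hgron
    _ = √(M / m) * (Real.exp (-(ω * m) * t) * ‖z 0‖) +
        R * M / (ω * m) * (1 - Real.exp (-(ω * m) * t)) := by
      rw [gronwallBound_of_K_ne_0 (neg_ne_zero.2 (by positivity)), Real.sqrt_div hM0]
      linear_combination (R / (ω * m)) * (1 - Real.exp (-(ω * m) * t)) * Real.mul_self_sqrt hM0

end EnergyEstimate

/-- Parameter-estimation part of the paper's Theorem 2: under the
concurrent-learning adaptive law the parameter error `z = θ̂ − θ*` obeys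
`z' = −PΩz + Pr` with `P`, `Ω` symmetric positive definite, `λ_m`, `λ_M` the
smallest/largest eigenvalues of `P`, `ω` the smallest eigenvalue of `Ω`, and
`‖r(t)‖ ≤ R`; then
`‖z(t)‖ ≤ √(λ_M/λ_m) (e^{−ω λ_m t}‖z(0)‖ + R λ_M/(ω λ_m))` for all `t ≥ 0`,
so `z` converges exponentially to a bounded set. -/
theorem concurrent_learning_parameter_error_bound
    {k : ℕ} (P Ω : Matrix (Fin k) (Fin k) ℝ)
    (hPsymm : P.IsSymm) (hPpd : P.PosDef)
    (hΩsymm : Ω.IsSymm) (hΩpd : Ω.PosDef)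
    (lm lM : ℝ) (hlm : 0 < lm) (hlmM : lm ≤ lM)
    (hPmin : IsLeast (Set.range hPpd.isHermitian.eigenvalues) lm)
    (hPmax : IsGreatest (Set.range hPpd.isHermitian.eigenvalues) lM)
    (ω : ℝ) (hω : 0 < ω)
    (hΩmin : IsLeast (Set.range hΩpd.isHermitian.eigenvalues) ω)
    (r z : ℝ → EuclideanSpace ℝ (Fin k))
    (hr : Continuous r)
    (R : ℝ) (hR : ∀ t, 0 ≤ t → ‖r t‖ ≤ R)
    (hz : ∀ t, 0 ≤ t →
      HasDerivAt z
        (-(Matrix.toEuclideanLin (P * Ω) (z t)) + Matrix.toEuclideanLin P (r t)) t) :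
    ∀ t, 0 ≤ t → ‖z t‖ ≤
      Real.sqrt (lM / lm) *
        (Real.exp (-(ω * lm) * t) * ‖z 0‖ + R * lM / (ω * lm)) := by
  intro t ht
  have hbound := concurrent_learning_parameter_error_bound_general
    (P := LinearMap.toContinuousLinearMap (toEuclideanLin P)) (Ω := fun _ => toEuclideanLin Ω)
    (isSymmetric_toEuclideanLin_iff.2 hPpd.isHermitian) hlm (hlm.le.trans hlmM)
    (le_re_inner_toEuclideanLin_of_le_eigenvalues _ (forall_mem_range.1 hPmin.2))
    (re_inner_toEuclideanLin_le_of_eigenvalues_le _ (forall_mem_range.1 hPmax.2)) hω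
    (fun _ _ => le_re_inner_toEuclideanLin_of_le_eigenvalues _ (forall_mem_range.1 hΩmin.2)) hR
    (fun s hs => by simpa using (hz s hs).hasDerivWithinAt) ht
  have hR0 : 0 ≤ R := (norm_nonneg _).trans (hR 0 le_rfl)
  have hradius : 0 ≤ R * lM / (ω * lm) := by have := hlm.le.trans hlmM; positivity
  have hsqrt : 1 ≤ √(lM / lm) := Real.one_le_sqrt.2 ((one_le_div hlm).2 hlmM)
  rw [mul_add]
  refine hbound.trans (add_le_add_right ?_ _)
  calc R * lM / (ω * lm) * (1 - Real.exp (-(ω * lm) * t)) ≤ R * lM / (ω * lm) :=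
        mul_le_of_le_one_right hradius (sub_le_self 1 (Real.exp_pos _).le)
    _ ≤ √(lM / lm) * (R * lM / (ω * lm)) := le_mul_of_one_le_left hradius hsqrt
end
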